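/- arXiv:1209.3074 — 2 statements merged into one kernel-verified Lean document; each statement's English description precedes it below -/
import Mathlib

section
/- Let N ≥ 3 be an integer, a ∈ ℝ, and let f : ℝ → ℝ be continuous with f(0) = 0; set F(s) = ∫₀^s f(t) dt. Let u : ℝ^N → ℝ be a C² function satisfying −Δu(x) + a·u(x) = f(u(x)) for every x ∈ ℝ^N, and assume there are constants C, c > 0 such that |u(x)| + ‖∇u(x)‖ ≤ C·exp(−c‖x‖) for all x ∈ ℝ^N. Then u satisfies the Pohozaev identity ((N−2)/2)·∫_{ℝ^N} ‖∇u(x)‖² dx = N·∫_{ℝ^N} ( F(u(x)) − (a/2)·u(x)² ) dx. -/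
open MeasureTheory Real

/-- The Laplacian of `u` at `x`: the trace of the second derivative,
computed as the sum of pure second derivatives along the coordinate directions. -/
noncomputable def lap {N : ℕ} (u : EuclideanSpace ℝ (Fin N) → ℝ)
    (x : EuclideanSpace ℝ (Fin N)) : ℝ :=
  ∑ i, iteratedFDeriv ℝ 2 u x ![EuclideanSpace.single i 1, EuclideanSpace.single i 1]

/-!
On a solution of `-Δu = G'(u)`, the dilation flux `V = ⟨∇u, x⟩ ∇u + (G(u) - ‖∇u‖² / 2) x` has
divergence `N G(u) - (N - 2) / 2 ‖∇u‖²`, the second-order terms cancelling by symmetry of the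
Hessian. Since `‖V(x)‖ / (1 + ‖x‖)` is integrable while the gradients of dilated cutoffs are
`O(1 / (1 + ‖x‖))` uniformly in the scale and tend to zero pointwise, dominated convergence gives
`∫ div V = 0`.
-/

open Filter InnerProductSpace Topology Module
open scoped Gradient Laplacian

section Divergence

variable {E : Type*} [NormedAddCommGroup E] [NormedSpace ℝ E]

/-- The divergence of a vector field, as the trace of its derivative. -/
noncomputable def divergence (V : E → E) (x : E) : ℝ :=
  LinearMap.trace ℝ E (fderiv ℝ V x)

variable {V W : E → E} {x : E}

lemma divergence_add (hV : DifferentiableAt ℝ V x) (hW : DifferentiableAt ℝ W x) :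
    divergence (fun y => V y + W y) x = divergence V x + divergence W x := by
  simp [divergence, fderiv_fun_add hV hW]

lemma divergence_smul [FiniteDimensional ℝ E] {φ : E → ℝ} (hφ : DifferentiableAt ℝ φ x)
    (hV : DifferentiableAt ℝ V x) :
    divergence (fun y => φ y • V y) x = φ x * divergence V x + fderiv ℝ φ x (V x) := by
  simp [divergence, fderiv_fun_smul hφ hV, LinearMap.trace_smulRight]

lemma divergence_id [FiniteDimensional ℝ E] (x : E) :
    divergence (fun y : E => y) x = finrank ℝ E := by
  simp [divergence]

lemma continuous_divergence [FiniteDimensional ℝ E] (hV : ContDiff ℝ 1 V) :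
    Continuous (divergence V) :=
  ((LinearMap.trace ℝ E ∘ₗ ContinuousLinearMap.coeLM ℝ).continuous_of_finiteDimensional).comp
    (hV.continuous_fderiv one_ne_zero)

variable [FiniteDimensional ℝ E] [MeasurableSpace E] [BorelSpace E] {μ : Measure E}
  [μ.IsAddHaarMeasure]

lemma integral_fderiv_eq_zero {F : Type*} [NormedAddCommGroup F] [NormedSpace ℝ F] {g : E → F}
    (hg : Differentiable ℝ g) (hint : Integrable g μ)
    (hint' : Integrable (fderiv ℝ g) μ) : ∫ x, fderiv ℝ g x ∂μ = 0 := by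
  ext v
  rw [ContinuousLinearMap.integral_apply hint']
  simpa using integral_smul_fderiv_eq_neg_fderiv_smul_of_integrable (μ := μ) (v := v)
    (f := fun _ => (1 : ℝ)) (g := g) (by simp) (by simpa using hint'.apply_continuousLinearMap v)
    (by simpa using hint) (fun _ _ => by fun_prop) (fun x _ => hg x)

lemma integral_divergence_eq_zero (hV : Differentiable ℝ V) (hint : Integrable V μ)
    (hint' : Integrable (fderiv ℝ V) μ) : ∫ x, divergence V x ∂μ = 0 := by
  let tr : (E →L[ℝ] E) →L[ℝ] ℝ :=
    (LinearMap.trace ℝ E ∘ₗ ContinuousLinearMap.coeLM ℝ).toContinuousLinearMap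
  calc ∫ x, divergence V x ∂μ = tr (∫ x, fderiv ℝ V x ∂μ) := tr.integral_comp_comm hint'
    _ = 0 := by rw [integral_fderiv_eq_zero hV hint hint', map_zero]

lemma integral_mul_divergence {φ : E → ℝ} (hφ : ContDiff ℝ 1 φ) (hφc : HasCompactSupport φ)
    (hV : ContDiff ℝ 1 V) :
    ∫ x, φ x * divergence V x ∂μ = -∫ x, fderiv ℝ φ x (V x) ∂μ := by
  have hφV : ContDiff ℝ 1 fun x => φ x • V x := hφ.smul hV
  have hφVc : HasCompactSupport fun x => φ x • V x := hφc.smul_right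
  have hint₁ : Integrable (fun x => φ x * divergence V x) μ :=
    (hφ.continuous.mul (continuous_divergence hV)).integrable_of_hasCompactSupport hφc.mul_right
  have hint₂ : Integrable (fun x => fderiv ℝ φ x (V x)) μ :=
    ((hφ.continuous_fderiv one_ne_zero).clm_apply hV.continuous).integrable_of_hasCompactSupport
      ((hφc.fderiv ℝ).mono' fun x hx => subset_tsupport _ fun h => hx (by simp [h]))
  rw [eq_neg_iff_add_eq_zero, ← integral_add hint₁ hint₂]
  simp_rw [← fun x => divergence_smul (hφ.differentiable one_ne_zero x)
    (hV.differentiable one_ne_zero x)]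
  exact integral_divergence_eq_zero (hφV.differentiable one_ne_zero)
    (hφV.continuous.integrable_of_hasCompactSupport hφVc)
    ((hφV.continuous_fderiv one_ne_zero).integrable_of_hasCompactSupport (hφVc.fderiv ℝ))

end Divergence

section Cutoff

variable {E : Type*} [NormedAddCommGroup E] [NormedSpace ℝ E] [FiniteDimensional ℝ E]

/-- A smooth cutoff equal to `1` on the ball of radius `n + 1` and to `0` outside the ball of
radius `2 (n + 1)`, obtained by dilating one fixed bump function. -/
noncomputable def dilatedBump (n : ℕ) (x : E) : ℝ :=
  (⟨1, 2, one_pos, one_lt_two⟩ : ContDiffBump (0 : E)) (((n : ℝ) + 1)⁻¹ • x)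

lemma contDiff_dilatedBump {k : ℕ∞} (n : ℕ) : ContDiff ℝ k (dilatedBump (E := E) n) :=
  (ContDiffBump.contDiff _).comp (contDiff_const_smul _)

lemma hasCompactSupport_dilatedBump (n : ℕ) : HasCompactSupport (dilatedBump (E := E) n) :=
  (ContDiffBump.hasCompactSupport _).comp_smul (by positivity)

lemma norm_dilatedBump_le_one (n : ℕ) (x : E) : ‖dilatedBump n x‖ ≤ 1 := by
  rw [dilatedBump, Real.norm_of_nonneg (ContDiffBump.nonneg _)]
  exact ContDiffBump.le_one _

lemma eventually_dilatedBump_eventuallyEq_one (x : E) :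
    ∀ᶠ n in atTop, dilatedBump (E := E) n =ᶠ[𝓝 x] 1 := by
  filter_upwards [eventually_ge_atTop ⌈‖x‖⌉₊] with n hn
  have hxn : ‖x‖ < n + 1 := (Nat.ceil_le.1 hn).trans_lt (lt_add_one _)
  filter_upwards [continuous_norm.continuousAt.eventually_lt_const hxn] with y hy
  refine ContDiffBump.one_of_mem_closedBall _ ?_
  rw [mem_closedBall_zero_iff, norm_smul, norm_inv, Real.norm_of_nonneg (by positivity)]
  exact inv_mul_le_one_of_le₀ hy.le (by positivity)

lemma exists_norm_fderiv_dilatedBump_le :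
    ∃ M, ∀ n, ∀ x : E, ‖fderiv ℝ (dilatedBump n) x‖ ≤ M / (1 + ‖x‖) := by
  let χ : ContDiffBump (0 : E) := ⟨1, 2, one_pos, one_lt_two⟩
  have hχ : ContDiff ℝ 1 χ := χ.contDiff
  have hcont : Continuous fun y => (1 + ‖y‖) • fderiv ℝ χ y :=
    (by fun_prop : Continuous fun y : E => 1 + ‖y‖).smul (hχ.continuous_fderiv one_ne_zero)
  have hcpt : HasCompactSupport fun y => (1 + ‖y‖) • fderiv ℝ χ y :=
    (χ.hasCompactSupport.fderiv ℝ).smul_left (f := fun y => 1 + ‖y‖)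
  obtain ⟨M, hM⟩ := hcont.bounded_above_of_compact_support hcpt
  refine ⟨M, fun n x => ?_⟩
  set r : ℝ := ((n : ℝ) + 1)⁻¹
  have hr₀ : 0 ≤ r := by positivity
  have hr₁ : r ≤ 1 := inv_le_one_of_one_le₀ (by simp)
  have hfderiv : fderiv ℝ (dilatedBump n) x = r • fderiv ℝ χ (r • x) :=
    fderiv_comp_smul r
  rw [le_div_iff₀ (by positivity), hfderiv, norm_smul, Real.norm_of_nonneg hr₀]
  -- As `r ≤ 1`, rescaling costs nothing: `r (1 + ‖x‖) ≤ 1 + ‖r x‖`.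
  calc r * ‖fderiv ℝ χ (r • x)‖ * (1 + ‖x‖) = (r + r * ‖x‖) * ‖fderiv ℝ χ (r • x)‖ := by ring
    _ ≤ (1 + ‖r • x‖) * ‖fderiv ℝ χ (r • x)‖ := by
      rw [norm_smul, Real.norm_of_nonneg hr₀]; gcongr
    _ ≤ M := by
      simpa only [norm_smul (1 + ‖r • x‖), Real.norm_of_nonneg (by positivity : 0 ≤ 1 + ‖r • x‖)]
        using hM (r • x)

variable [MeasurableSpace E] [BorelSpace E] {μ : Measure E} {V : E → E}

lemma tendsto_integral_dilatedBump_mul {g : E → ℝ} (hg : Integrable g μ) :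
    Tendsto (fun n => ∫ x, dilatedBump n x * g x ∂μ) atTop (𝓝 (∫ x, g x ∂μ)) := by
  refine tendsto_integral_of_dominated_convergence _ (fun n => ?_) hg.norm
    (fun n => .of_forall fun x => ?_) (.of_forall fun x => ?_)
  · exact (contDiff_dilatedBump (k := 0) n).continuous.aestronglyMeasurable.mul
      hg.aestronglyMeasurable
  · rw [norm_mul]
    exact mul_le_of_le_one_left (norm_nonneg _) (norm_dilatedBump_le_one n x)
  · refine tendsto_const_nhds.congr' ?_
    filter_upwards [eventually_dilatedBump_eventuallyEq_one x] with n hn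
    simp [hn.eq_of_nhds]

lemma tendsto_integral_fderiv_dilatedBump_apply (hV : AEStronglyMeasurable V μ)
    (hint : Integrable (fun x => ‖V x‖ / (1 + ‖x‖)) μ) :
    Tendsto (fun n => ∫ x, fderiv ℝ (dilatedBump n) x (V x) ∂μ) atTop (𝓝 0) := by
  obtain ⟨M, hM⟩ := exists_norm_fderiv_dilatedBump_le (E := E)
  rw [← integral_zero E ℝ (μ := μ)]
  refine tendsto_integral_of_dominated_convergence _ (fun n => ?_) (hint.const_mul M)
    (fun n => .of_forall fun x => ?_) (.of_forall fun x => ?_)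
  · have hcont := (contDiff_dilatedBump (E := E) (k := 1) n).continuous_fderiv one_ne_zero
    exact (ContinuousLinearMap.id ℝ (E →L[ℝ] ℝ)).aestronglyMeasurable_comp₂
      hcont.aestronglyMeasurable hV
  · calc ‖fderiv ℝ (dilatedBump n) x (V x)‖ ≤ ‖fderiv ℝ (dilatedBump n) x‖ * ‖V x‖ :=
          ContinuousLinearMap.le_opNorm _ _
      _ ≤ M / (1 + ‖x‖) * ‖V x‖ := by gcongr; exact hM n x
      _ = M * (‖V x‖ / (1 + ‖x‖)) := by ring
  · refine tendsto_const_nhds.congr' ?_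
    filter_upwards [eventually_dilatedBump_eventuallyEq_one x] with n hn
    simp [hn.fderiv_eq]

theorem integral_divergence_eq_zero_of_integrable_norm_div [μ.IsAddHaarMeasure]
    (hV : ContDiff ℝ 1 V)
    (hint : Integrable (fun x => ‖V x‖ / (1 + ‖x‖)) μ) (hdiv : Integrable (divergence V) μ) :
    ∫ x, divergence V x ∂μ = 0 := by
  have hlim := tendsto_integral_dilatedBump_mul hdiv
  simp_rw [integral_mul_divergence (contDiff_dilatedBump (k := 1) _)
    (hasCompactSupport_dilatedBump _) hV] at hlim
  have hlim₀ := (tendsto_integral_fderiv_dilatedBump_apply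
    hV.continuous.aestronglyMeasurable hint).neg
  rw [neg_zero] at hlim₀
  exact tendsto_nhds_unique hlim hlim₀

end Cutoff

section Gradient

variable {E : Type*} [NormedAddCommGroup E] [InnerProductSpace ℝ E]

lemma contDiff_gradient [CompleteSpace E] {n : ℕ∞} {u : E → ℝ} (hu : ContDiff ℝ (n + 1) u) :
    ContDiff ℝ n (∇ u) := by
  have hlin : IsBoundedLinearMap ℝ (toDual ℝ E).symm :=
    ⟨⟨map_add _, fun c y => by simp⟩, 1, one_pos, fun y => by simp⟩
  exact hlin.contDiff.comp (hu.fderiv_right le_rfl)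

lemma inner_fderiv_gradient [CompleteSpace E] {u : E → ℝ} (hu : ContDiff ℝ 2 u) (x v w : E) :
    ⟪fderiv ℝ (∇ u) x v, w⟫_ℝ = fderiv ℝ (fderiv ℝ u) x v w := by
  have hgrad : DifferentiableAt ℝ (∇ u) x :=
    (contDiff_gradient (n := 1) hu).differentiable one_ne_zero x
  have hDu : DifferentiableAt ℝ (fderiv ℝ u) x :=
    (hu.fderiv_right (m := 1) le_rfl).differentiable one_ne_zero x
  calc ⟪fderiv ℝ (∇ u) x v, w⟫_ℝ = fderiv ℝ (fun y => ⟪∇ u y, w⟫_ℝ) x v := by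
        rw [fderiv_inner_apply ℝ hgrad (differentiableAt_const w)]
        simp only [fderiv_fun_const, Pi.zero_apply, zero_apply, inner_zero_right,
          zero_add]
    _ = fderiv ℝ (fun y => fderiv ℝ u y w) x v := by simp only [inner_gradient_left]
    _ = fderiv ℝ (fderiv ℝ u) x v w := by
        simp [fderiv_clm_apply hDu (differentiableAt_const w)]

lemma inner_fderiv_gradient_comm [CompleteSpace E] {u : E → ℝ} (hu : ContDiff ℝ 2 u) (x v w : E) :
    ⟪fderiv ℝ (∇ u) x v, w⟫_ℝ = ⟪fderiv ℝ (∇ u) x w, v⟫_ℝ := by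
  rw [inner_fderiv_gradient hu, inner_fderiv_gradient hu]
  exact (hu.contDiffAt.isSymmSndFDerivAt (by simp)).eq v w

lemma divergence_gradient [FiniteDimensional ℝ E] {u : E → ℝ} (hu : ContDiff ℝ 2 u) (x : E) :
    divergence (∇ u) x = Δ u x := by
  rw [laplacian_eq_iteratedFDeriv_stdOrthonormalBasis, divergence,
    LinearMap.trace_eq_sum_inner _ (stdOrthonormalBasis ℝ E)]
  simp only [ContinuousLinearMap.coe_coe, real_inner_comm (fderiv ℝ (∇ u) x _),
    inner_fderiv_gradient hu, iteratedFDeriv_two_apply, Matrix.cons_val_zero, Matrix.cons_val_one]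

end Gradient

section PohozaevField

variable {E : Type*} [NormedAddCommGroup E] [InnerProductSpace ℝ E]

/-- The Pohozaev vector field `⟨∇u, x⟩ ∇u + (G(u) - ‖∇u‖² / 2) x`: the flux associated with the
dilation `x ↦ t x` by Noether's theorem for the Lagrangian `‖∇u‖² / 2 - G(u)`. -/
noncomputable def pohozaevField [CompleteSpace E] (G : ℝ → ℝ) (u : E → ℝ) (x : E) : E :=
  ⟪∇ u x, x⟫_ℝ • ∇ u x + (G (u x) - ‖∇ u x‖ ^ 2 / 2) • x

variable {G : ℝ → ℝ} {u : E → ℝ}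

lemma contDiff_pohozaevField [CompleteSpace E] (hG : ContDiff ℝ 1 G) (hu : ContDiff ℝ 2 u) :
    ContDiff ℝ 1 (pohozaevField G u) := by
  have hgrad : ContDiff ℝ 1 (∇ u) := contDiff_gradient (n := 1) hu
  have hGu : ContDiff ℝ 1 fun x => G (u x) := hG.comp (hu.of_le one_le_two)
  exact ((hgrad.inner ℝ contDiff_id).smul hgrad).add
    ((hGu.sub ((hgrad.norm_sq ℝ).div_const 2)).smul contDiff_id)

lemma norm_pohozaevField_le [CompleteSpace E] (x : E) :
    ‖pohozaevField G u x‖ ≤ (3 / 2 * ‖∇ u x‖ ^ 2 + |G (u x)|) * ‖x‖ := by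
  have hsub : |G (u x) - ‖∇ u x‖ ^ 2 / 2| ≤ |G (u x)| + ‖∇ u x‖ ^ 2 / 2 :=
    (abs_sub _ _).trans_eq (by rw [abs_of_nonneg (by positivity : 0 ≤ ‖∇ u x‖ ^ 2 / 2)])
  calc ‖pohozaevField G u x‖
      ≤ |⟪∇ u x, x⟫_ℝ| * ‖∇ u x‖ + |G (u x) - ‖∇ u x‖ ^ 2 / 2| * ‖x‖ := by
        rw [← Real.norm_eq_abs, ← Real.norm_eq_abs, ← norm_smul, ← norm_smul]
        exact norm_add_le _ _
    _ ≤ ‖∇ u x‖ * ‖x‖ * ‖∇ u x‖ + (|G (u x)| + ‖∇ u x‖ ^ 2 / 2) * ‖x‖ := by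
        gcongr
        exact abs_real_inner_le_norm _ _
    _ = (3 / 2 * ‖∇ u x‖ ^ 2 + |G (u x)|) * ‖x‖ := by ring

variable [FiniteDimensional ℝ E]

lemma divergence_pohozaevField (hG : Differentiable ℝ G) (hu : ContDiff ℝ 2 u) {x : E}
    (heq : -Δ u x = deriv G (u x)) :
    divergence (pohozaevField G u) x =
      finrank ℝ E * G (u x) - ((finrank ℝ E : ℝ) - 2) / 2 * ‖∇ u x‖ ^ 2 := by
  have hgrad : DifferentiableAt ℝ (∇ u) x :=
    (contDiff_gradient (n := 1) hu).differentiable one_ne_zero x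
  have hux : DifferentiableAt ℝ u x := hu.differentiable two_ne_zero x
  have hradial : DifferentiableAt ℝ (fun y => ⟪∇ u y, y⟫_ℝ) x := hgrad.inner ℝ differentiableAt_id
  have hpot : HasFDerivAt (fun y => G (u y)) (deriv G (u x) • fderiv ℝ u x) x :=
    (hG (u x)).hasDerivAt.comp_hasFDerivAt x hux.hasFDerivAt
  have hlagr : HasFDerivAt (fun y => G (u y) - ‖∇ u y‖ ^ 2 / 2) _ x :=
    hpot.sub (hgrad.hasFDerivAt.norm_sq.mul_const (2⁻¹ : ℝ))
  have hradial' : fderiv ℝ (fun y => ⟪∇ u y, y⟫_ℝ) x (∇ u x) =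
      ‖∇ u x‖ ^ 2 + ⟪fderiv ℝ (∇ u) x (∇ u x), x⟫_ℝ := by
    rw [fderiv_inner_apply ℝ hgrad differentiableAt_fun_id, fderiv_fun_id,
      ContinuousLinearMap.id_apply, real_inner_self_eq_norm_sq]
  have hlagr' : fderiv ℝ (fun y => G (u y) - ‖∇ u y‖ ^ 2 / 2) x x =
      deriv G (u x) * ⟪∇ u x, x⟫_ℝ - ⟪fderiv ℝ (∇ u) x (∇ u x), x⟫_ℝ := by
    rw [hlagr.fderiv]
    simp [inner_gradient_left, inner_fderiv_gradient_comm hu x (∇ u x) x]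
  have hid : DifferentiableAt ℝ (fun y : E => y) x := differentiableAt_fun_id
  unfold pohozaevField
  rw [divergence_add (hradial.fun_smul hgrad) (hlagr.differentiableAt.fun_smul hid),
    divergence_smul hradial hgrad, divergence_smul hlagr.differentiableAt hid, divergence_id,
    divergence_gradient hu, hradial', hlagr', ← heq]
  ring

variable [MeasurableSpace E] [BorelSpace E] {μ : Measure E} [μ.IsAddHaarMeasure]

theorem pohozaev_identity_general (hG : ContDiff ℝ 1 G) (hu : ContDiff ℝ 2 u)
    (heq : ∀ x, -Δ u x = deriv G (u x)) (hgrad : Integrable (fun x => ‖∇ u x‖ ^ 2) μ)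
    (hGu : Integrable (fun x => G (u x)) μ) :
    ((finrank ℝ E : ℝ) - 2) / 2 * ∫ x, ‖∇ u x‖ ^ 2 ∂μ = finrank ℝ E * ∫ x, G (u x) ∂μ := by
  have hV := contDiff_pohozaevField hG hu
  have hdiv : divergence (pohozaevField G u) = fun x =>
      finrank ℝ E * G (u x) - ((finrank ℝ E : ℝ) - 2) / 2 * ‖∇ u x‖ ^ 2 :=
    funext fun x => divergence_pohozaevField (hG.differentiable one_ne_zero) hu (heq x)
  have hweight : Integrable (fun x => ‖pohozaevField G u x‖ / (1 + ‖x‖)) μ := by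
    refine ((hgrad.const_mul (3 / 2)).add hGu.abs).mono' ?_ (.of_forall fun x => ?_)
    · exact (hV.continuous.norm.div (by fun_prop) fun x => by positivity).aestronglyMeasurable
    · rw [Real.norm_of_nonneg (by positivity), div_le_iff₀ (by positivity)]
      refine (norm_pohozaevField_le x).trans ?_
      simp only [Pi.add_apply]
      gcongr
      exact le_add_of_nonneg_left zero_le_one
  have hflux := integral_divergence_eq_zero_of_integrable_norm_div hV hweight
    (hdiv ▸ (hGu.const_mul _).sub (hgrad.const_mul _))
  rw [hdiv, integral_sub (hGu.const_mul _) (hgrad.const_mul _), integral_const_mul,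
    integral_const_mul] at hflux
  exact (sub_eq_zero.1 hflux).symm

end PohozaevField

section Decay

lemma integrable_comp_of_locallyLipschitz {α F F' : Type*} [MeasurableSpace α] {μ : Measure α}
    [NormedAddCommGroup F] [ProperSpace F] [NormedAddCommGroup F'] {g : F → F'}
    (hg : LocallyLipschitz g) (hg₀ : g 0 = 0) {h : α → F} (hh : Integrable h μ) {R : ℝ}
    (hR : ∀ x, ‖h x‖ ≤ R) : Integrable (fun x => g (h x)) μ := by
  obtain ⟨K, hK⟩ := LocallyLipschitzOn.exists_lipschitzOnWith_of_compact
    (isCompact_closedBall 0 R) hg.locallyLipschitzOn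
  refine (hh.norm.const_mul K).mono' (hg.continuous.comp_aestronglyMeasurable hh.1)
    (.of_forall fun x => ?_)
  have hR₀ : 0 ≤ R := (norm_nonneg _).trans (hR x)
  simpa [hg₀] using hK.norm_sub_le (mem_closedBall_zero_iff.2 (hR x))
    (Metric.mem_closedBall_self hR₀)

variable {E : Type*} [NormedAddCommGroup E] [NormedSpace ℝ E] [FiniteDimensional ℝ E]
  [MeasurableSpace E] [BorelSpace E] {μ : Measure E} [μ.IsAddHaarMeasure]

lemma integrable_exp_neg_mul_norm {c : ℝ} (hc : 0 < c) :
    Integrable (fun x : E => exp (-c * ‖x‖)) μ := by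
  cases subsingleton_or_nontrivial E
  · exact (by fun_prop : Continuous fun x : E => exp (-c * ‖x‖)).integrable_of_hasCompactSupport
      (HasCompactSupport.of_compactSpace _)
  · rw [integrable_fun_norm_addHaar μ (f := fun t => exp (-c * t))]
    have h := integrableOn_rpow_mul_exp_neg_mul_rpow (p := 1) (s := (finrank ℝ E - 1 : ℕ)) (b := c)
      (by linarith [Nat.cast_nonneg (α := ℝ) (finrank ℝ E - 1)]) one_pos hc
    simpa using h

lemma integrable_comp_of_norm_le_exp {F F' : Type*} [NormedAddCommGroup F] [ProperSpace F]
    [NormedAddCommGroup F'] {g : F → F'} (hg : LocallyLipschitz g) (hg₀ : g 0 = 0) {h : E → F}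
    (hh : AEStronglyMeasurable h μ) {C c : ℝ} (hc : 0 < c)
    (hdecay : ∀ x, ‖h x‖ ≤ C * exp (-c * ‖x‖)) : Integrable (fun x => g (h x)) μ := by
  have hC : 0 ≤ C := by simpa using (norm_nonneg _).trans (hdecay 0)
  have hbound (x : E) : ‖h x‖ ≤ C :=
    (hdecay x).trans (mul_le_of_le_one_right hC (exp_le_one_iff.2
      (mul_nonpos_of_nonpos_of_nonneg (neg_nonpos.2 hc.le) (norm_nonneg x))))
  exact integrable_comp_of_locallyLipschitz hg hg₀
    (((integrable_exp_neg_mul_norm hc).const_mul C).mono' hh (.of_forall hdecay)) hbound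

end Decay

theorem pohozaev_identity_of_norm_le_exp {E : Type*} [NormedAddCommGroup E]
    [InnerProductSpace ℝ E] [FiniteDimensional ℝ E] [MeasurableSpace E] [BorelSpace E]
    {μ : Measure E} [μ.IsAddHaarMeasure] {G : ℝ → ℝ} {u : E → ℝ} (hG : ContDiff ℝ 1 G)
    (hG₀ : G 0 = 0) (hu : ContDiff ℝ 2 u) (heq : ∀ x, -Δ u x = deriv G (u x)) {C c : ℝ}
    (hc : 0 < c) (hdecay : ∀ x, |u x| + ‖∇ u x‖ ≤ C * exp (-c * ‖x‖)) :
    ((finrank ℝ E : ℝ) - 2) / 2 * ∫ x, ‖∇ u x‖ ^ 2 ∂μ = finrank ℝ E * ∫ x, G (u x) ∂μ := by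
  have hgrad : Integrable (fun x => ‖∇ u x‖ ^ 2) μ :=
    integrable_comp_of_norm_le_exp (contDiff_norm_sq ℝ).locallyLipschitz (by simp)
      (contDiff_gradient (n := 1) hu).continuous.aestronglyMeasurable hc
      fun x => (le_add_of_nonneg_left (abs_nonneg _)).trans (hdecay x)
  have hGu : Integrable (fun x => G (u x)) μ :=
    integrable_comp_of_norm_le_exp hG.locallyLipschitz hG₀ hu.continuous.aestronglyMeasurable hc
      fun x => (le_add_of_nonneg_right (norm_nonneg _)).trans (hdecay x)
  exact pohozaev_identity_general hG hu heq hgrad hGu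

section Potential

/-- The potential `G(s) = F(s) - a s² / 2`, with `F` the primitive of `f`, which turns
`-Δu + a u = f(u)` into `-Δu = G'(u)`. -/
noncomputable def massPotential (f : ℝ → ℝ) (a s : ℝ) : ℝ :=
  (∫ t in (0 : ℝ)..s, f t) - a / 2 * s ^ 2

variable {f : ℝ → ℝ}

lemma massPotential_zero (a : ℝ) : massPotential f a 0 = 0 := by
  simp [massPotential]

lemma hasDerivAt_massPotential (hf : Continuous f) (a s : ℝ) :
    HasDerivAt (massPotential f a) (f s - a * s) s := by
  have hsq : HasDerivAt (fun s : ℝ => a / 2 * s ^ 2) (a * s) s :=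
    ((hasDerivAt_pow 2 s).const_mul (a / 2)).congr_deriv (by norm_num; ring)
  exact (hf.integral_hasStrictDerivAt 0 s).hasDerivAt.sub hsq

lemma contDiff_massPotential (hf : Continuous f) (a : ℝ) : ContDiff ℝ 1 (massPotential f a) := by
  have hderiv : deriv (massPotential f a) = fun s => f s - a * s :=
    funext fun s => (hasDerivAt_massPotential hf a s).deriv
  rw [contDiff_one_iff_deriv, hderiv]
  exact ⟨fun s => (hasDerivAt_massPotential hf a s).differentiableAt, by fun_prop⟩

lemma neg_laplacian_eq_deriv_massPotential_iff {E : Type*} [NormedAddCommGroup E]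
    [InnerProductSpace ℝ E] [FiniteDimensional ℝ E] (hf : Continuous f) {a : ℝ} {u : E → ℝ}
    {x : E} : -Δ u x = deriv (massPotential f a) (u x) ↔ -Δ u x + a * u x = f (u x) := by
  rw [(hasDerivAt_massPotential hf a (u x)).deriv, eq_sub_iff_add_eq]

end Potential

lemma lap_eq_laplacian {N : ℕ} (u : EuclideanSpace ℝ (Fin N) → ℝ) : lap u = Δ u := by
  simp [laplacian_eq_iteratedFDeriv_orthonormalBasis u (EuclideanSpace.basisFun (Fin N) ℝ),
    funext_iff, lap]

theorem pohozaev_identity {N : ℕ} (hN : 3 ≤ N) (a : ℝ) (f : ℝ → ℝ)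
    (hf : Continuous f) (hf0 : f 0 = 0)
    (F : ℝ → ℝ) (hF : ∀ s : ℝ, F s = ∫ t in (0:ℝ)..s, f t)
    (u : EuclideanSpace ℝ (Fin N) → ℝ) (hu : ContDiff ℝ 2 u)
    (heq : ∀ x, -lap u x + a * u x = f (u x))
    (C c : ℝ) (hC : 0 < C) (hc : 0 < c)
    (hdecay : ∀ x, |u x| + ‖gradient u x‖ ≤ C * Real.exp (-c * ‖x‖)) :
    ((N : ℝ) - 2) / 2 * ∫ x, ‖gradient u x‖ ^ 2 =
      (N : ℝ) * ∫ x, (F (u x) - a / 2 * u x ^ 2) := by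
  simpa [massPotential, hF] using
    pohozaev_identity_of_norm_le_exp (contDiff_massPotential hf a) (massPotential_zero a) hu
      (fun x => (neg_laplacian_eq_deriv_massPotential_iff hf).2 (lap_eq_laplacian u ▸ heq x))
      hc hdecay
end

section
/- (Brezis–Kato) Let N ≥ 3 be an integer and let q : ℝ^N → [0,∞) be a measurable function with ∫_{ℝ^N} q(x)^{N/2} dx < ∞. Then for every ε > 0 there exists a constant σ > 0 (depending on ε and q) such that for every compactly supported C¹ function u : ℝ^N → ℝ one has ∫_{ℝ^N} q(x)·u(x)² dx ≤ ε·∫_{ℝ^N} ‖∇u(x)‖² dx + σ·∫_{ℝ^N} u(x)² dx. -/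
open MeasureTheory Real

/-!
Split the potential as `q = V + (q - V)`, where `V` is the part of `q` above a large height `M`.
The bounded part contributes at most `M ∫ |u|ᵖ`. For `V`, Hölder's inequality with exponents `n / p`
and `n / (n - p)` followed by the Gagliardo–Nirenberg–Sobolev inequality gives
`∫ |V| |u|ᵖ ≤ ‖V‖_{n/p} ‖u‖_{np/(n-p)}ᵖ ≤ Cᵖ ‖V‖_{n/p} ∫ |∇u|ᵖ`, and `‖V‖_{n/p}` tends to `0` as
`M → ∞` because `q ∈ L^{n/p}`.
-/

open scoped NNReal ENNReal

section MeasureSpace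

variable {α F G : Type*} [MeasurableSpace α] {μ : Measure α}
  [NormedAddCommGroup F] [NormedAddCommGroup G]

lemma memLp_of_integrable_rpow {f : α → ℝ} {s : ℝ≥0} (hs : s ≠ 0)
    (hf_meas : AEStronglyMeasurable f μ) (hf_nonneg : ∀ᵐ x ∂μ, 0 ≤ f x)
    (hf_int : Integrable (fun x => f x ^ (s : ℝ)) μ) : MemLp f s μ := by
  rw [← integrable_norm_rpow_iff hf_meas (by simpa using hs) ENNReal.coe_ne_top]
  refine hf_int.congr ?_
  filter_upwards [hf_nonneg] with x hx
  rw [norm_of_nonneg hx, ENNReal.coe_toReal]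

lemma ofReal_integral_norm_rpow {f : α → F} {p : ℝ≥0} (hp : p ≠ 0) (hf : MemLp f p μ) :
    ENNReal.ofReal (∫ x, ‖f x‖ ^ (p : ℝ) ∂μ) = eLpNorm f p μ ^ (p : ℝ) := by
  have hint : Integrable (fun x => ‖f x‖ ^ (p : ℝ)) μ :=
    hf.integrable_norm_rpow (by simpa using hp) ENNReal.coe_ne_top
  rw [ofReal_integral_eq_lintegral_ofReal hint (.of_forall fun x => by positivity),
    eLpNorm_nnreal_pow_eq_lintegral hp]
  refine lintegral_congr fun x => ?_
  rw [← ENNReal.ofReal_rpow_of_nonneg (norm_nonneg _) p.coe_nonneg, ofReal_norm]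

lemma integrable_and_integral_norm_le_of_lintegral_enorm_le {f : α → F}
    (hf : AEStronglyMeasurable f μ) {C : ℝ} (hC : 0 ≤ C)
    (h : ∫⁻ x, ‖f x‖ₑ ∂μ ≤ ENNReal.ofReal C) : Integrable f μ ∧ ∫ x, ‖f x‖ ∂μ ≤ C := by
  refine ⟨⟨hf, h.trans_lt ENNReal.ofReal_lt_top⟩, ?_⟩
  rw [integral_norm_eq_lintegral_enorm hf]
  exact ENNReal.toReal_le_of_le_ofReal hC h

lemma exists_eLpNorm_le_and_enorm_le_add_const {q : α → G} {s : ℝ≥0∞} (hq : MemLp q s μ)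
    {δ : ℝ} (hδ : 0 < δ) :
    ∃ V : α → G, AEStronglyMeasurable V μ ∧ eLpNorm V s μ ≤ ENNReal.ofReal δ ∧
      ∃ M : ℝ, 0 < M ∧ ∀ᵐ x ∂μ, ‖q x‖ₑ ≤ ‖V x‖ₑ + ENNReal.ofReal M := by
  obtain ⟨q', hq'_meas, hqq'⟩ := hq.1
  obtain ⟨M, hM, htail⟩ :=
    (hq.ae_eq hqq').eLpNorm_indicator_norm_ge_pos_le hq'_meas hδ
  have hset : MeasurableSet {x | M ≤ ‖q' x‖₊} :=
    hq'_meas.norm.measurable measurableSet_Ici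
  refine ⟨_, (hq'_meas.indicator hset).aestronglyMeasurable, htail, M, hM, ?_⟩
  filter_upwards [hqq'] with x hx
  rw [hx]
  by_cases hMx : M ≤ ‖q' x‖
  · simp [hMx]
  · simpa [hMx, ← ofReal_norm] using ENNReal.ofReal_le_ofReal (not_le.mp hMx).le

lemma lintegral_enorm_mul_enorm_rpow_le {V : α → G} {u : α → F} {s t : ℝ≥0∞} {p : ℝ≥0}
    [ENNReal.HolderConjugate s t] (hp : 0 < p) (hV : AEStronglyMeasurable V μ)
    (hu : AEStronglyMeasurable u μ) :
    ∫⁻ x, ‖V x‖ₑ * ‖u x‖ₑ ^ (p : ℝ) ∂μ ≤ eLpNorm V s μ * eLpNorm u (t * p) μ ^ (p : ℝ) := by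
  have hu_pow : AEStronglyMeasurable (fun x => ‖u x‖ ^ (p : ℝ)) μ :=
    (hu.norm.aemeasurable.pow_const _).aestronglyMeasurable
  calc ∫⁻ x, ‖V x‖ₑ * ‖u x‖ₑ ^ (p : ℝ) ∂μ
      = eLpNorm ((fun x => ‖V x‖) • fun x => ‖u x‖ ^ (p : ℝ)) 1 μ := by
        simp [eLpNorm_one_eq_lintegral_enorm, enorm_mul, enorm_rpow_of_nonneg]
    _ ≤ eLpNorm (fun x => ‖V x‖) s μ * eLpNorm (fun x => ‖u x‖ ^ (p : ℝ)) t μ :=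
        eLpNorm_smul_le_mul_eLpNorm hu_pow hV.norm
    _ = eLpNorm V s μ * eLpNorm u (t * p) μ ^ (p : ℝ) := by
        rw [eLpNorm_norm, eLpNorm_norm_rpow _ (NNReal.coe_pos.mpr hp), ENNReal.ofReal_coe_nnreal]

lemma exists_lintegral_enorm_mul_enorm_rpow_le_add {q : α → G} {s t : ℝ≥0∞} {p : ℝ≥0}
    [ENNReal.HolderConjugate s t] (hp : 0 < p) (hq : MemLp q s μ) {δ : ℝ} (hδ : 0 < δ) :
    ∃ σ : ℝ, 0 < σ ∧ ∀ u : α → F, AEStronglyMeasurable u μ →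
      ∫⁻ x, ‖q x‖ₑ * ‖u x‖ₑ ^ (p : ℝ) ∂μ ≤
        ENNReal.ofReal δ * eLpNorm u (t * p) μ ^ (p : ℝ) +
          ENNReal.ofReal σ * eLpNorm u p μ ^ (p : ℝ) := by
  obtain ⟨V, hV_meas, hV_small, M, hM, hqV⟩ := exists_eLpNorm_le_and_enorm_le_add_const hq hδ
  refine ⟨M, hM, fun u hu => ?_⟩
  have hu_pow : AEMeasurable (fun x => ‖u x‖ₑ ^ (p : ℝ)) μ := hu.enorm.pow_const _
  calc ∫⁻ x, ‖q x‖ₑ * ‖u x‖ₑ ^ (p : ℝ) ∂μ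
      ≤ ∫⁻ x, (‖V x‖ₑ * ‖u x‖ₑ ^ (p : ℝ) + ENNReal.ofReal M * ‖u x‖ₑ ^ (p : ℝ)) ∂μ := by
        refine lintegral_mono_ae ?_
        filter_upwards [hqV] with x hx
        rw [← add_mul]
        gcongr
    _ = ∫⁻ x, ‖V x‖ₑ * ‖u x‖ₑ ^ (p : ℝ) ∂μ + ENNReal.ofReal M * eLpNorm u p μ ^ (p : ℝ) := by
        rw [lintegral_add_right' _ (hu_pow.const_mul _), lintegral_const_mul'' _ hu_pow,
          eLpNorm_nnreal_pow_eq_lintegral hp.ne']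
    _ ≤ ENNReal.ofReal δ * eLpNorm u (t * p) μ ^ (p : ℝ) +
          ENNReal.ofReal M * eLpNorm u p μ ^ (p : ℝ) := by
        gcongr
        exact (lintegral_enorm_mul_enorm_rpow_le hp hV_meas hu).trans (by gcongr)

end MeasureSpace

section NormedSpace

variable {E F G : Type*} [NormedAddCommGroup E] [NormedSpace ℝ E] [FiniteDimensional ℝ E]
  [MeasurableSpace E] [BorelSpace E] (μ : Measure E) [μ.IsAddHaarMeasure]
  [NormedAddCommGroup F] [InnerProductSpace ℝ F] [NormedAddCommGroup G] {p : ℝ≥0}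

lemma eLpNorm_mul_le_eLpNorm_fderiv_of_holderConjugate {u : E → F} (hu : ContDiff ℝ 1 u)
    (hu_supp : HasCompactSupport u) (hp : 1 ≤ p) {t : ℝ≥0}
    (ht : (Module.finrank ℝ E / p : ℝ≥0).HolderConjugate t) :
    eLpNorm u (t * p) μ ≤ eLpNormLESNormFDerivOfEqInnerConst μ p * eLpNorm (fderiv ℝ u) p μ := by
  have hn : 0 < Module.finrank ℝ E := by
    have h := ht.pos
    contrapose! h
    simp [Nat.le_zero.mp h]
  have hexp : ((t * p : ℝ≥0) : ℝ)⁻¹ = (p : ℝ)⁻¹ - (Module.finrank ℝ E : ℝ)⁻¹ := by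
    have hconj := ht.coe.inv_add_inv_eq_one
    push_cast at hconj ⊢
    rw [inv_div] at hconj
    rw [mul_inv, eq_sub_of_add_eq' hconj]
    field_simp
  exact_mod_cast eLpNorm_le_eLpNorm_fderiv_of_eq_inner μ hu hu_supp hp hn hexp

lemma exists_lintegral_enorm_mul_enorm_rpow_le_fderiv (hp : 1 ≤ p) (hpn : p < Module.finrank ℝ E)
    {q : E → G} (hq : MemLp q (Module.finrank ℝ E / p : ℝ≥0) μ) {ε : ℝ} (hε : 0 < ε) :
    ∃ σ : ℝ, 0 < σ ∧ ∀ u : E → F, ContDiff ℝ 1 u → HasCompactSupport u →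
      ∫⁻ x, ‖q x‖ₑ * ‖u x‖ₑ ^ (p : ℝ) ∂μ ≤
        ENNReal.ofReal ε * eLpNorm (fderiv ℝ u) p μ ^ (p : ℝ) +
          ENNReal.ofReal σ * eLpNorm u p μ ^ (p : ℝ) := by
  have hp_pos : 0 < p := one_pos.trans_le hp
  obtain ⟨t, ht⟩ : ∃ t, (Module.finrank ℝ E / p : ℝ≥0).HolderConjugate t :=
    ⟨_, .conjExponent ((one_lt_div hp_pos).mpr hpn)⟩
  have := ht.coe_ennreal
  set C := eLpNormLESNormFDerivOfEqInnerConst μ p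
  obtain ⟨δ, hδ, hCδ⟩ := exists_pos_mul_lt hε ((C : ℝ) ^ (p : ℝ))
  obtain ⟨σ, hσ, hbound⟩ :=
    exists_lintegral_enorm_mul_enorm_rpow_le_add (F := F) (t := t) hp_pos hq hδ
  refine ⟨σ, hσ, fun u hu hu_supp => (hbound u hu.continuous.aestronglyMeasurable).trans ?_⟩
  gcongr ?_ + _
  calc ENNReal.ofReal δ * eLpNorm u (t * p) μ ^ (p : ℝ)
      ≤ ENNReal.ofReal δ * (C * eLpNorm (fderiv ℝ u) p μ) ^ (p : ℝ) := by
        gcongr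
        exact eLpNorm_mul_le_eLpNorm_fderiv_of_holderConjugate μ hu hu_supp hp ht
    _ = ENNReal.ofReal (C ^ (p : ℝ) * δ) * eLpNorm (fderiv ℝ u) p μ ^ (p : ℝ) := by
        rw [ENNReal.mul_rpow_of_nonneg _ _ p.coe_nonneg, mul_comm ((C : ℝ) ^ (p : ℝ)),
          ENNReal.ofReal_mul hδ.le, ← NNReal.coe_rpow, ENNReal.ofReal_coe_nnreal,
          ENNReal.coe_rpow_of_nonneg _ p.coe_nonneg, mul_assoc]
    _ ≤ ENNReal.ofReal ε * eLpNorm (fderiv ℝ u) p μ ^ (p : ℝ) := by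
        gcongr

theorem brezis_kato_general (hp : 1 ≤ p) (hpn : p < Module.finrank ℝ E)
    {q : E → G} (hq : MemLp q (Module.finrank ℝ E / p : ℝ≥0) μ) {ε : ℝ} (hε : 0 < ε) :
    ∃ σ : ℝ, 0 < σ ∧ ∀ u : E → F, ContDiff ℝ 1 u → HasCompactSupport u →
      Integrable (fun x => ‖q x‖ * ‖u x‖ ^ (p : ℝ)) μ ∧
      ∫ x, ‖q x‖ * ‖u x‖ ^ (p : ℝ) ∂μ ≤
        ε * ∫ x, ‖fderiv ℝ u x‖ ^ (p : ℝ) ∂μ + σ * ∫ x, ‖u x‖ ^ (p : ℝ) ∂μ := by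
  have hp_ne : p ≠ 0 := (one_pos.trans_le hp).ne'
  obtain ⟨σ, hσ, hbound⟩ :=
    exists_lintegral_enorm_mul_enorm_rpow_le_fderiv (F := F) μ hp hpn hq hε
  refine ⟨σ, hσ, fun u hu hu_supp => ?_⟩
  have hu_memLp : MemLp u p μ := hu.continuous.memLp_of_hasCompactSupport hu_supp
  have hdu_memLp : MemLp (fderiv ℝ u) p μ :=
    (hu.continuous_fderiv one_ne_zero).memLp_of_hasCompactSupport (hu_supp.fderiv (𝕜 := ℝ))
  have hmeas : AEStronglyMeasurable (fun x => ‖q x‖ * ‖u x‖ ^ (p : ℝ)) μ :=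
    hq.1.norm.mul (hu_memLp.1.norm.aemeasurable.pow_const _).aestronglyMeasurable
  have hle : ∫⁻ x, ‖‖q x‖ * ‖u x‖ ^ (p : ℝ)‖ₑ ∂μ ≤ ENNReal.ofReal
      (ε * ∫ x, ‖fderiv ℝ u x‖ ^ (p : ℝ) ∂μ + σ * ∫ x, ‖u x‖ ^ (p : ℝ) ∂μ) := by
    rw [ENNReal.ofReal_add (by positivity) (by positivity), ENNReal.ofReal_mul hε.le,
      ENNReal.ofReal_mul hσ.le, ofReal_integral_norm_rpow hp_ne hu_memLp,
      ofReal_integral_norm_rpow hp_ne hdu_memLp]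
    simpa [enorm_mul, enorm_rpow_of_nonneg] using hbound u hu hu_supp
  obtain ⟨hint, hreal⟩ :=
    integrable_and_integral_norm_le_of_lintegral_enorm_le hmeas (by positivity) hle
  exact ⟨hint, by simpa [abs_rpow_of_nonneg] using hreal⟩

end NormedSpace

theorem brezis_kato {N : ℕ} (hN : 3 ≤ N)
    (q : EuclideanSpace ℝ (Fin N) → ℝ) (hq_meas : Measurable q)
    (hq_nonneg : ∀ x, 0 ≤ q x)
    (hq_int : Integrable (fun x => q x ^ ((N : ℝ) / 2))) :
    ∀ ε > (0 : ℝ), ∃ σ > (0 : ℝ),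
      ∀ u : EuclideanSpace ℝ (Fin N) → ℝ, ContDiff ℝ 1 u → HasCompactSupport u →
        ∫ x, q x * u x ^ 2 ≤
          ε * (∫ x, ‖gradient u x‖ ^ 2) + σ * ∫ x, u x ^ 2 := by
  have hq : MemLp q (N / 2 : ℝ≥0) := memLp_of_integrable_rpow (by positivity)
    hq_meas.aestronglyMeasurable (.of_forall hq_nonneg) (by simpa using hq_int)
  intro ε hε
  obtain ⟨σ, hσ, hbound⟩ := brezis_kato_general (F := ℝ) (q := q) volume one_le_two
    (by simpa using mod_cast hN) (by simpa using hq) hε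
  exact ⟨σ, hσ, fun u hu hu_supp => by
    simpa [gradient, abs_of_nonneg, hq_nonneg] using (hbound u hu hu_supp).2⟩
end
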